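/- Let (ρ, u) be a smooth solution of (QNS_ε) on (0,T) × T^d, let c > 0, and set v = u + c ∇(φ_ε(ρ)), κ̃² = κ² − 2νc + c², λ̃ = (μ − c)/μ. Then on (0,T) × T^d: ∂_t ρ + div(ρ v) = c Δ(h_ε(ρ)), and ∂_t(ρ v) + div(ρ v ⊗ v) + ∇(ρ^γ) + λ̃ ∇(p_ε(ρ)) − c Δ(h_ε(ρ) v) + p̃_ε(ρ) v − 2(ν − c) div(h_ε(ρ) Dv) − (2ν − c) ∇(g_ε(ρ) div v) − 2 κ̃² ρ ∇( h_ε'(ρ) div(h_ε'(ρ) ∇√ρ) / √ρ ) = 0. -/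

import Mathlib

open MeasureTheory Real

noncomputable section

/-- Partial derivative of a scalar field in the coordinate direction `i`. -/
def pd {d : ℕ} (i : Fin d) (f : (Fin d → ℝ) → ℝ) (x : Fin d → ℝ) : ℝ :=
  fderiv ℝ f x (Pi.single i 1)

/-- Gradient of a scalar field. -/
def grad {d : ℕ} (f : (Fin d → ℝ) → ℝ) (x : Fin d → ℝ) : Fin d → ℝ :=
  fun i => pd i f x

/-- Divergence of a vector field. -/
def dvg {d : ℕ} (u : (Fin d → ℝ) → (Fin d → ℝ)) (x : Fin d → ℝ) : ℝ :=
  ∑ i, pd i (fun y => u y i) x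

/-- Row-wise divergence of a matrix field: `(dvgM M x) i = ∑ j, ∂_j M_{ij}`. -/
def dvgM {d : ℕ} (M : (Fin d → ℝ) → Fin d → Fin d → ℝ) (x : Fin d → ℝ) : Fin d → ℝ :=
  fun i => ∑ j, pd j (fun y => M y i j) x

/-- Hessian of a scalar field. -/
def hess {d : ℕ} (f : (Fin d → ℝ) → ℝ) (x : Fin d → ℝ) : Fin d → Fin d → ℝ :=
  fun i j => pd i (fun y => pd j f y) x

/-- Laplacian of a scalar field. -/
def lap {d : ℕ} (f : (Fin d → ℝ) → ℝ) (x : Fin d → ℝ) : ℝ :=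
  ∑ i, pd i (fun y => pd i f y) x

/-- Jacobian matrix of a vector field: `(jac u x) i j = ∂_j u_i`. -/
def jac {d : ℕ} (u : (Fin d → ℝ) → (Fin d → ℝ)) (x : Fin d → ℝ) : Fin d → Fin d → ℝ :=
  fun i j => pd j (fun y => u y i) x

/-- Symmetric part of the gradient of a vector field, `Du = (∇u + (∇u)ᵀ)/2`. -/
def symD {d : ℕ} (u : (Fin d → ℝ) → (Fin d → ℝ)) (x : Fin d → ℝ) : Fin d → Fin d → ℝ :=
  fun i j => (jac u x i j + jac u x j i) / 2

/-- Antisymmetric part of the gradient of a vector field, `Au = (∇u − (∇u)ᵀ)/2`. -/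
def antiD {d : ℕ} (u : (Fin d → ℝ) → (Fin d → ℝ)) (x : Fin d → ℝ) : Fin d → Fin d → ℝ :=
  fun i j => (jac u x i j - jac u x j i) / 2

/-- Tensor product of two vectors: `(a ⊗ b)_{ij} = a_i b_j`. -/
def tens {d : ℕ} (a b : Fin d → ℝ) : Fin d → Fin d → ℝ := fun i j => a i * b j

/-- ℤ^d-periodicity: a function of this kind descends to the torus `T^d = ℝ^d/ℤ^d`. -/
def SpacePeriodic {d : ℕ} {E : Type*} (f : (Fin d → ℝ) → E) : Prop :=
  ∀ x : Fin d → ℝ, ∀ n : Fin d → ℤ, f (x + fun i => (n i : ℝ)) = f x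

/-- Fundamental domain of the torus `T^d = ℝ^d/ℤ^d` (with its probability Lebesgue measure). -/
def unitBox (d : ℕ) : Set (Fin d → ℝ) := Set.Icc 0 1

/-- The approximating viscosity coefficient `h_ε(r) = r + ε r^{7/8} + ε r^γ`. -/
def hfun (ε γ r : ℝ) : ℝ := r + ε * r ^ ((7 : ℝ) / 8) + ε * r ^ γ

/-- `g_ε(r) = r h_ε'(r) − h_ε(r)`. -/
def gfun (ε γ r : ℝ) : ℝ := r * deriv (hfun ε γ) r - hfun ε γ r

/-- `λ(ε) = e^{−1/ε⁴}`. -/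
def lamfun (ε : ℝ) : ℝ := Real.exp (-1 / ε ^ 4)

/-- The damping coefficient `p̃_ε(r) = λ(ε)(r^{1/ε²} + r^{−1/ε²})`. -/
def ptil (ε r : ℝ) : ℝ := lamfun ε * (r ^ (1 / ε ^ 2) + r ^ (-(1 / ε ^ 2)))

/-- `μ = ν − √(ν² − κ²)`. -/
def muof (ν κ : ℝ) : ℝ := ν - Real.sqrt (ν ^ 2 - κ ^ 2)

/-- `p_ε` is an antiderivative on `(0,∞)` of `r ↦ μ p̃_ε(r) h_ε'(r) / r`. -/
def IsPeps (ε γ ν κ : ℝ) (P : ℝ → ℝ) : Prop :=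
  ∀ r : ℝ, 0 < r → HasDerivAt P (muof ν κ * ptil ε r * deriv (hfun ε γ) r / r) r

/-- `φ_ε` is a smooth function on `(0,∞)` with `r φ_ε'(r) = h_ε'(r)`. -/
def IsPhieps (ε γ : ℝ) (Φ : ℝ → ℝ) : Prop :=
  ContDiffOn ℝ (⊤ : ℕ∞) Φ (Set.Ioi 0) ∧ ∀ r : ℝ, 0 < r → r * deriv Φ r = deriv (hfun ε γ) r

/-- `f_ε` satisfies `r f_ε'(r) − f_ε(r) = p_ε(r)` on `(0,∞)`. -/
def IsFeps (P F : ℝ → ℝ) : Prop :=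
  (∀ r : ℝ, 0 < r → DifferentiableAt ℝ F r) ∧
  ∀ r : ℝ, 0 < r → r * deriv F r - F r = P r

/-- The vector field `∇( h_ε'(ρ) div(h_ε'(ρ) ∇√ρ) / √ρ )`; the capillarity term of (QNS_ε) is
`2 κ² ρ` times this field. -/
def Kvec {d : ℕ} (ε γ : ℝ) (ρ : (Fin d → ℝ) → ℝ) (x : Fin d → ℝ) : Fin d → ℝ :=
  grad (fun y => deriv (hfun ε γ) (ρ y) *
      dvg (fun z => deriv (hfun ε γ) (ρ z) • grad (fun w => Real.sqrt (ρ w)) z) y /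
      Real.sqrt (ρ y)) x

/-- A smooth solution of the approximating system (QNS_ε) on `(0,T) × T^d`:
a pair of `C^∞` functions on `[0,T] × T^d` with `ρ > 0` everywhere, satisfying the continuity
equation and the momentum equation pointwise. -/
def IsQNSSol (d : ℕ) (ε γ ν κ T : ℝ) (P : ℝ → ℝ)
    (ρ : ℝ → (Fin d → ℝ) → ℝ) (u : ℝ → (Fin d → ℝ) → (Fin d → ℝ)) : Prop :=
  ContDiffOn ℝ (⊤ : ℕ∞) (fun p : ℝ × (Fin d → ℝ) => ρ p.1 p.2) (Set.Icc 0 T ×ˢ Set.univ) ∧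
  ContDiffOn ℝ (⊤ : ℕ∞) (fun p : ℝ × (Fin d → ℝ) => u p.1 p.2) (Set.Icc 0 T ×ˢ Set.univ) ∧
  (∀ t x, 0 < ρ t x) ∧
  (∀ t, SpacePeriodic (ρ t)) ∧
  (∀ t, SpacePeriodic (u t)) ∧
  (∀ t ∈ Set.Ioo 0 T, ∀ x : Fin d → ℝ,
    deriv (fun s => ρ s x) t + dvg (fun y => ρ t y • u t y) x = 0) ∧
  (∀ t ∈ Set.Ioo 0 T, ∀ x : Fin d → ℝ, ∀ i : Fin d,
    deriv (fun s => ρ s x * u s x i) t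
      + dvgM (fun y i' j => ρ t y * u t y i' * u t y j) x i
      + grad (fun y => ρ t y ^ γ + P (ρ t y)) x i
      + ptil ε (ρ t x) * u t x i
    = 2 * ν * dvgM (fun y i' j => hfun ε γ (ρ t y) * symD (u t) y i' j) x i
      + 2 * ν * grad (fun y => gfun ε γ (ρ t y) * dvg (u t) y) x i
      + 2 * κ ^ 2 * ρ t x * Kvec ε γ (ρ t) x i)


/-!
Since `ρ ∇Φ(ρ) = ∇h(ρ)`, the effective momentum is `ρ v = ρ u + c ∇h(ρ)`, so the mass equation only
gains the term `c Δh(ρ)`. In the momentum equation, the renormalized continuity equation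
`∂ₜh(ρ) = -div(h(ρ) u) - g(ρ) div u` gives
`∂ₜ∇h(ρ) = -∇div(h(ρ) u) - ∇(g(ρ) div u)`, and the part of the convection linear in `c` is
`div(u ⊗ ∇h + ∇h ⊗ u) = ∇div(h u) + Δ(h u) - 2 div(h Du)`; together they shift the two viscosities
by `c` and produce the diffusion `c Δ(h v)`. What remains is a multiple of
`div(h(ρ) ∇²Φ(ρ)) + ∇(g(ρ) ΔΦ(ρ))`, coming from the `c²` terms and from the viscosity acting on
`c ∇Φ(ρ)`. The generalized Bohm identity equates it with twice the capillary force
`ρ ∇(h'(ρ) div(h'(ρ) ∇√ρ) / √ρ)`, which turns `κ²` into `κ² - 2νc + c²`. Finally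
`∇P(ρ) = μ a(ρ) ∇Φ(ρ)`, so the drag exerted on `c ∇Φ(ρ)` is absorbed by the pressure `P`.
-/

section PartialDerivatives

open scoped ContDiff Topology

variable {d : ℕ} {i j : Fin d} {f g : (Fin d → ℝ) → ℝ} {x : Fin d → ℝ}

@[fun_prop]
theorem differentiableAt_of_contDiff_infty {E F : Type*} [NormedAddCommGroup E] [NormedSpace ℝ E]
    [NormedAddCommGroup F] [NormedSpace ℝ F] {f : E → F} (hf : ContDiff ℝ ∞ f) (p : E) :
    DifferentiableAt ℝ f p :=
  hf.differentiable (by simp) p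

@[fun_prop]
theorem contDiff_pd (hf : ContDiff ℝ ∞ f) : ContDiff ℝ ∞ (fun y => pd i f y) :=
  (hf.fderiv_right (by simp)).clm_apply contDiff_const

@[fun_prop]
theorem contDiff_grad (hf : ContDiff ℝ ∞ f) : ContDiff ℝ ∞ (fun y => grad f y) :=
  contDiff_pi.2 fun _ => contDiff_pd hf

@[fun_prop]
theorem contDiff_dvg {u : (Fin d → ℝ) → Fin d → ℝ} (hu : ContDiff ℝ ∞ u) :
    ContDiff ℝ ∞ (fun y => dvg u y) := by
  unfold dvg
  fun_prop

@[fun_prop]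
theorem contDiff_symD {u : (Fin d → ℝ) → Fin d → ℝ} (hu : ContDiff ℝ ∞ u) :
    ContDiff ℝ ∞ (fun y => symD u y i j) := by
  unfold symD jac
  fun_prop

@[fun_prop]
theorem contDiff_hess (hf : ContDiff ℝ ∞ f) : ContDiff ℝ ∞ (fun y => hess f y i j) :=
  contDiff_pd (contDiff_pd hf)

@[fun_prop]
theorem contDiff_lap (hf : ContDiff ℝ ∞ f) : ContDiff ℝ ∞ (fun y => lap f y) :=
  contDiff_dvg (contDiff_grad hf)

theorem pd_add (hf : DifferentiableAt ℝ f x) (hg : DifferentiableAt ℝ g x) :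
    pd i (fun y => f y + g y) x = pd i f x + pd i g x := by
  simp only [pd, fderiv_fun_add hf hg, add_apply]

theorem pd_neg : pd i (fun y => -f y) x = -pd i f x := by
  simp only [pd, fderiv_fun_neg, neg_apply]

theorem pd_const_mul (hf : DifferentiableAt ℝ f x) (c : ℝ) :
    pd i (fun y => c * f y) x = c * pd i f x := by
  simp only [pd, fderiv_const_mul hf, smul_apply, smul_eq_mul]

theorem pd_mul (hf : DifferentiableAt ℝ f x) (hg : DifferentiableAt ℝ g x) :
    pd i (fun y => f y * g y) x = f x * pd i g x + g x * pd i f x := by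
  simp only [pd, fderiv_fun_mul hf hg, add_apply,
    smul_apply, smul_eq_mul]

theorem pd_sum {ι : Type*} {s : Finset ι} {f : ι → (Fin d → ℝ) → ℝ}
    (hf : ∀ k ∈ s, DifferentiableAt ℝ (f k) x) :
    pd i (fun y => ∑ k ∈ s, f k y) x = ∑ k ∈ s, pd i (f k) x := by
  simp only [pd, fderiv_fun_sum hf, sum_apply]

theorem pd_comp {φ : ℝ → ℝ} {φ' : ℝ} (hφ : HasDerivAt φ φ' (f x)) (hf : DifferentiableAt ℝ f x) :
    pd i (fun y => φ (f y)) x = φ' * pd i f x := by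
  have hcomp : HasFDerivAt (fun y => φ (f y)) (φ' • fderiv ℝ f x) x :=
    hφ.comp_hasFDerivAt x hf.hasFDerivAt
  simp only [pd, hcomp.fderiv, smul_apply, smul_eq_mul]

theorem fderiv_fderiv_apply_comm {E F : Type*} [NormedAddCommGroup E] [NormedSpace ℝ E]
    [NormedAddCommGroup F] [NormedSpace ℝ F] {f : E → F} {p : E} (hf : ContDiffAt ℝ 2 f p)
    (v w : E) :
    fderiv ℝ (fun q => fderiv ℝ f q v) p w = fderiv ℝ (fun q => fderiv ℝ f q w) p v := by
  have hdf : DifferentiableAt ℝ (fderiv ℝ f) p :=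
    (hf.fderiv_right (m := 1) (by norm_num)).differentiableAt one_ne_zero
  have hsymm : IsSymmSndFDerivAt ℝ f p := hf.isSymmSndFDerivAt (by simp)
  simp only [fderiv_clm_apply hdf (differentiableAt_const _), fderiv_fun_const, Pi.zero_apply,
    ContinuousLinearMap.comp_zero, zero_add, ContinuousLinearMap.flip_apply]
  exact hsymm.eq w v

theorem pd_comm (hf : ContDiffAt ℝ 2 f x) :
    pd i (fun y => pd j f y) x = pd j (fun y => pd i f y) x :=
  fderiv_fderiv_apply_comm hf _ _

theorem hasDerivAt_time_slice {W : ℝ × (Fin d → ℝ) → ℝ} {t : ℝ}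
    (hW : DifferentiableAt ℝ W (t, x)) :
    HasDerivAt (fun s => W (s, x)) (fderiv ℝ W (t, x) (1, 0)) t :=
  hW.hasFDerivAt.comp_hasDerivAt t ((hasDerivAt_id t).prodMk (hasDerivAt_const t x))

theorem pd_space_slice {W : ℝ × (Fin d → ℝ) → ℝ} {t : ℝ} (hW : DifferentiableAt ℝ W (t, x)) :
    pd i (fun y => W (t, y)) x = fderiv ℝ W (t, x) (0, Pi.single i 1) := by
  have hslice : HasFDerivAt (fun y => W (t, y)) _ x :=
    hW.hasFDerivAt.comp x (hasFDerivAt_prodMk_right t x)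
  simp [pd, hslice.fderiv]

theorem hasDerivAt_pd_of_contDiffAt {w : ℝ → (Fin d → ℝ) → ℝ} {t : ℝ}
    (hw : ContDiffAt ℝ 2 (fun p : ℝ × (Fin d → ℝ) => w p.1 p.2) (t, x)) :
    HasDerivAt (fun s => pd i (w s) x) (pd i (fun y => deriv (fun s => w s y) t) x) t := by
  set W := fun p : ℝ × (Fin d → ℝ) => w p.1 p.2
  let e : Fin d → ℝ := Pi.single i 1
  have hW : ∀ᶠ p in 𝓝 (t, x), DifferentiableAt ℝ W p :=
    (hw.eventually (by simp)).mono fun p hp => hp.differentiableAt two_ne_zero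
  have hdW : DifferentiableAt ℝ (fderiv ℝ W) (t, x) :=
    (hw.fderiv_right (m := 1) (by norm_num)).differentiableAt one_ne_zero
  have hpd : (fun s => pd i (w s) x) =ᶠ[𝓝 t] fun s => fderiv ℝ W (s, x) (0, e) :=
    ((Continuous.prodMk_left x).tendsto t |>.eventually hW).mono fun s hs => pd_space_slice hs
  have hderiv : (fun y => deriv (fun s => w s y) t) =ᶠ[𝓝 x] fun y => fderiv ℝ W (t, y) (1, 0) :=
    ((Continuous.prodMk_right t).tendsto x |>.eventually hW).mono fun y hy =>
      (hasDerivAt_time_slice hy).deriv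
  have hvalue : pd i (fun y => deriv (fun s => w s y) t) x
      = fderiv ℝ (fun p => fderiv ℝ W p (0, e)) (t, x) (1, 0) := by
    rw [fderiv_fderiv_apply_comm hw, pd, hderiv.fderiv_eq]
    exact pd_space_slice (hdW.clm_apply (differentiableAt_const _))
  rw [hvalue]
  exact (hasDerivAt_time_slice (hdW.clm_apply (differentiableAt_const _))).congr_of_eventuallyEq hpd

end PartialDerivatives

section VectorCalculus

open scoped ContDiff

variable {d : ℕ} {i j : Fin d} {h F : (Fin d → ℝ) → ℝ} {u w : (Fin d → ℝ) → Fin d → ℝ}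

theorem dvg_add_smul {x : Fin d → ℝ} (hu : DifferentiableAt ℝ u x) (hw : DifferentiableAt ℝ w x)
    (c : ℝ) : dvg (fun y => u y + c • w y) x = dvg u x + c * dvg w x := by
  simp (disch := fun_prop) only [dvg, Pi.add_apply, Pi.smul_apply, smul_eq_mul, pd_add,
    pd_const_mul, Finset.sum_add_distrib, Finset.mul_sum]

theorem dvg_smul {x : Fin d → ℝ} (hh : DifferentiableAt ℝ h x) (hu : DifferentiableAt ℝ u x) :
    dvg (fun y => h y • u y) x = h x * dvg u x + ∑ j, u x j * pd j h x := by
  simp (disch := fun_prop) only [dvg, Pi.smul_apply, smul_eq_mul, pd_mul, Finset.sum_add_distrib,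
    Finset.mul_sum]

theorem dvg_grad (F : (Fin d → ℝ) → ℝ) (x : Fin d → ℝ) : dvg (grad F) x = lap F x := rfl

theorem symD_add_smul {x : Fin d → ℝ} (hu : DifferentiableAt ℝ u x) (hw : DifferentiableAt ℝ w x)
    (c : ℝ) : symD (fun y => u y + c • w y) x i j = symD u x i j + c * symD w x i j := by
  simp (disch := fun_prop) only [symD, jac, Pi.add_apply, Pi.smul_apply, smul_eq_mul, pd_add,
    pd_const_mul]
  ring

theorem symD_grad {x : Fin d → ℝ} (hF : ContDiffAt ℝ 2 F x) :
    symD (grad F) x i j = hess F x i j := by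
  have hcomm : jac (grad F) x i j = jac (grad F) x j i := pd_comm hF
  rw [symD, hcomm, add_self_div_two]
  rfl

theorem dvgM_add_const_mul {A B : (Fin d → ℝ) → Fin d → Fin d → ℝ} {x : Fin d → ℝ}
    (hA : DifferentiableAt ℝ A x) (hB : DifferentiableAt ℝ B x) (c : ℝ) :
    dvgM (fun y i j => A y i j + c * B y i j) x i = dvgM A x i + c * dvgM B x i := by
  simp (disch := fun_prop) only [dvgM, pd_add, pd_const_mul, Finset.sum_add_distrib, Finset.mul_sum]

theorem dvgM_tens_grad_add_tens_grad (hh : ContDiff ℝ ∞ h) (hu : ContDiff ℝ ∞ u)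
    (x : Fin d → ℝ) :
    dvgM (fun y i j => u y i * grad h y j + grad h y i * u y j) x i
      = grad (fun y => dvg (fun z => h z • u z) y) x i + lap (fun y => h y * u y i) x
        - 2 * dvgM (fun y i j => h y * symD u y i j) x i := by
  have hentry : ∀ j y, u y i * grad h y j + grad h y i * u y j
      = pd i (fun z => h z * u z j) y + pd j (fun z => h z * u z i) y
        + -2 * (h y * symD u y i j) := fun j y => by
    simp (disch := fun_prop) only [pd_mul, grad, symD, jac]
    ring
  have hgrad_dvg : grad (fun y => dvg (fun z => h z • u z) y) x i
      = ∑ j, pd j (fun y => pd i (fun z => h z * u z j) y) x := by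
    simp only [grad, dvg, Pi.smul_apply, smul_eq_mul]
    rw [pd_sum fun j _ => by fun_prop]
    refine Finset.sum_congr rfl fun j _ => pd_comm ?_
    have hflux : ContDiff ℝ ∞ fun y => h y * u y j := by fun_prop
    exact (contDiff_infty.1 hflux 2).contDiffAt
  rw [hgrad_dvg]
  simp (disch := fun_prop) only [dvgM, lap, hentry, pd_add, pd_const_mul, Finset.sum_add_distrib,
    Finset.mul_sum]
  simp only [neg_mul, Finset.sum_neg_distrib]
  ring

theorem lap_mul_grad (hh : ContDiff ℝ ∞ h) (hF : ContDiff ℝ ∞ F) (x : Fin d → ℝ) :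
    lap (fun y => h y * grad F y i) x
      = dvgM (fun y i j => grad F y i * grad h y j) x i
        + dvgM (fun y i j => h y * hess F y i j) x i := by
  have hentry : ∀ j y, pd j (fun z => h z * grad F z i) y
      = grad F y i * grad h y j + h y * hess F y i j := fun j y => by
    have hcomm : pd j (fun z => grad F z i) y = hess F y i j :=
      pd_comm (contDiff_infty.1 hF 2).contDiffAt
    rw [pd_mul (by fun_prop) (by fun_prop), hcomm, add_comm]
    simp only [grad]
  simp (disch := fun_prop) only [lap, dvgM, hentry, pd_add, Finset.sum_add_distrib]

theorem dvgM_mul_hess (hh : ContDiff ℝ ∞ h) (hF : ContDiff ℝ ∞ F) (x : Fin d → ℝ) :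
    dvgM (fun y i j => h y * hess F y i j) x i
      = ∑ j, pd j h x * hess F x i j + h x * grad (lap F) x i := by
  have hcomm : ∀ j, pd j (fun y => hess F y i j) x = pd i (fun y => pd j (fun z => pd j F z) y) x :=
    fun j => pd_comm (contDiff_infty.1 (contDiff_pd hF) 2).contDiffAt
  have hgrad_lap : grad (lap F) x i = ∑ j, pd i (fun y => pd j (fun z => pd j F z) y) x :=
    pd_sum fun j _ => by fun_prop
  rw [hgrad_lap, Finset.mul_sum, ← Finset.sum_add_distrib]
  refine Finset.sum_congr rfl fun j _ => ?_
  rw [pd_mul (by fun_prop) (by fun_prop), hcomm]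
  ring

theorem pd_sum_sq_pd (hF : ContDiff ℝ ∞ F) (x : Fin d → ℝ) :
    pd i (fun y => ∑ j, pd j F y ^ 2) x = 2 * ∑ j, pd j F x * hess F x i j := by
  rw [pd_sum fun j _ => by fun_prop, Finset.mul_sum]
  refine Finset.sum_congr rfl fun j _ => ?_
  simp (disch := fun_prop) only [sq, pd_mul, hess]
  ring

theorem lap_mul_add_smul (hh : ContDiff ℝ ∞ h) (hu : ContDiff ℝ ∞ u) (hw : ContDiff ℝ ∞ w) (c : ℝ)
    (x : Fin d → ℝ) :
    lap (fun y => h y * (u y + c • w y) i) x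
      = lap (fun y => h y * u y i) x + c * lap (fun y => h y * w y i) x := by
  have hsplit : (fun y => h y * (u y + c • w y) i) = fun y => h y * u y i + c * (h y * w y i) := by
    ext y
    simp only [Pi.add_apply, Pi.smul_apply, smul_eq_mul]
    ring
  simp (disch := fun_prop) only [hsplit, lap, pd_add, pd_const_mul, Finset.sum_add_distrib,
    Finset.mul_sum]

theorem dvgM_mul_symD_add_smul (hh : ContDiff ℝ ∞ h) (hu : ContDiff ℝ ∞ u) (hw : ContDiff ℝ ∞ w)
    (c : ℝ) (x : Fin d → ℝ) :
    dvgM (fun y i j => h y * symD (fun z => u z + c • w z) y i j) x i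
      = dvgM (fun y i j => h y * symD u y i j) x i
        + c * dvgM (fun y i j => h y * symD w y i j) x i := by
  have hsplit : (fun y i j => h y * symD (fun z => u z + c • w z) y i j)
      = fun y i j => h y * symD u y i j + c * (h y * symD w y i j) := by
    ext y i j
    rw [symD_add_smul (by fun_prop) (by fun_prop)]
    ring
  rw [hsplit, dvgM_add_const_mul (by fun_prop) (by fun_prop)]

theorem grad_mul_dvg_add_smul (hh : ContDiff ℝ ∞ h) (hu : ContDiff ℝ ∞ u) (hw : ContDiff ℝ ∞ w)
    (c : ℝ) (x : Fin d → ℝ) :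
    grad (fun y => h y * dvg (fun z => u z + c • w z) y) x i
      = grad (fun y => h y * dvg u y) x i + c * grad (fun y => h y * dvg w y) x i := by
  have hsplit : (fun y => h y * dvg (fun z => u z + c • w z) y)
      = fun y => h y * dvg u y + c * (h y * dvg w y) := by
    ext y
    rw [dvg_add_smul (by fun_prop) (by fun_prop)]
    ring
  simp (disch := fun_prop) only [hsplit, grad, pd_add, pd_const_mul]

theorem dvgM_convection_add_smul {ρ : (Fin d → ℝ) → ℝ} (hρ : ContDiff ℝ ∞ ρ) (hh : ContDiff ℝ ∞ h)
    (hu : ContDiff ℝ ∞ u) (hw : ContDiff ℝ ∞ w) (hρw : ∀ y, ρ y • w y = grad h y) (c : ℝ)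
    (x : Fin d → ℝ) :
    dvgM (fun y i j => ρ y * (u y + c • w y) i * (u y + c • w y) j) x i
      = dvgM (fun y i j => ρ y * u y i * u y j) x i
        + c * dvgM (fun y i j => u y i * grad h y j + grad h y i * u y j) x i
        + c ^ 2 * dvgM (fun y i j => w y i * grad h y j) x i := by
  have hsplit : (fun y i j => ρ y * (u y + c • w y) i * (u y + c • w y) j)
      = fun y i j => ρ y * u y i * u y j + c * (u y i * grad h y j + grad h y i * u y j)
          + c ^ 2 * (w y i * grad h y j) := by
    ext y i j
    simp only [← hρw, Pi.add_apply, Pi.smul_apply, smul_eq_mul]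
    ring
  rw [hsplit, dvgM_add_const_mul (by fun_prop) (by fun_prop),
    dvgM_add_const_mul (by fun_prop) (by fun_prop)]

end VectorCalculus

section BohmPotential

open scoped ContDiff

/-- The bulk viscosity `g(r) = r h'(r) - h(r)` that the Bresch–Desjardins relation attaches to a
shear viscosity `h`. -/
def bulkViscosity (h : ℝ → ℝ) (r : ℝ) : ℝ := r * deriv h r - h r

/-- The generalized Bohm potential `h'(ρ) div(h'(ρ) ∇√ρ) / √ρ` of a density `ρ`; for `h(r) = r` it
is the quantum potential `Δ√ρ / √ρ`. -/
def bohmPotential {d : ℕ} (h : ℝ → ℝ) (ρ : (Fin d → ℝ) → ℝ) (x : Fin d → ℝ) : ℝ :=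
  deriv h (ρ x) * dvg (fun y => deriv h (ρ y) • grad (fun z => √(ρ z)) y) x / √(ρ x)

/-- `Φ` is a potential of the viscosity `h`: both are smooth on `(0,∞)` and `r Φ'(r) = h'(r)`, so
that `ρ ∇Φ(ρ) = ∇h(ρ)` for every positive density `ρ`. -/
structure IsViscosityPotential (h Φ : ℝ → ℝ) : Prop where
  contDiffOn_viscosity : ContDiffOn ℝ ∞ h (Set.Ioi 0)
  contDiffOn_potential : ContDiffOn ℝ ∞ Φ (Set.Ioi 0)
  mul_deriv : ∀ r : ℝ, 0 < r → r * deriv Φ r = deriv h r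

variable {d : ℕ} {i : Fin d} {h Φ φ P a : ℝ → ℝ} {μ : ℝ} {ρ : (Fin d → ℝ) → ℝ}
  {u : (Fin d → ℝ) → Fin d → ℝ}

theorem hasDerivAt_of_contDiffOn_Ioi (hφ : ContDiffOn ℝ ∞ φ (Set.Ioi 0)) {r : ℝ} (hr : 0 < r) :
    HasDerivAt φ (deriv φ r) r :=
  ((hφ.contDiffAt (Ioi_mem_nhds hr)).differentiableAt (by simp)).hasDerivAt

theorem contDiff_comp_of_pos (hφ : ContDiffOn ℝ ∞ φ (Set.Ioi 0)) (hρ : ContDiff ℝ ∞ ρ)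
    (hpos : ∀ y, 0 < ρ y) : ContDiff ℝ ∞ (fun y => φ (ρ y)) :=
  hφ.comp_contDiff hρ hpos

theorem contDiff_deriv_comp_of_pos (hφ : ContDiffOn ℝ ∞ φ (Set.Ioi 0)) (hρ : ContDiff ℝ ∞ ρ)
    (hpos : ∀ y, 0 < ρ y) : ContDiff ℝ ∞ (fun y => deriv φ (ρ y)) :=
  contDiff_comp_of_pos (hφ.deriv_of_isOpen isOpen_Ioi (by simp)) hρ hpos

theorem pd_comp_of_pos (hφ : ContDiffOn ℝ ∞ φ (Set.Ioi 0)) (hρ : ContDiff ℝ ∞ ρ)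
    (hpos : ∀ y, 0 < ρ y) (x : Fin d → ℝ) :
    pd i (fun y => φ (ρ y)) x = deriv φ (ρ x) * pd i ρ x :=
  pd_comp (hasDerivAt_of_contDiffOn_Ioi hφ (hpos x)) (by fun_prop)

theorem deriv_mul_dvg_smul (hh : ContDiffOn ℝ ∞ h (Set.Ioi 0)) (hρ : ContDiff ℝ ∞ ρ)
    (hpos : ∀ y, 0 < ρ y) (hu : ContDiff ℝ ∞ u) (x : Fin d → ℝ) :
    deriv h (ρ x) * dvg (fun y => ρ y • u y) x
      = dvg (fun y => h (ρ y) • u y) x + bulkViscosity h (ρ x) * dvg u x := by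
  have hH := differentiableAt_of_contDiff_infty (contDiff_comp_of_pos hh hρ hpos) x
  rw [dvg_smul (by fun_prop) (by fun_prop), dvg_smul hH (by fun_prop)]
  simp only [pd_comp_of_pos hh hρ hpos, bulkViscosity, mul_left_comm _ (deriv h (ρ x)),
    ← Finset.mul_sum]
  ring

theorem contDiffOn_bulkViscosity (hh : ContDiffOn ℝ ∞ h (Set.Ioi 0)) :
    ContDiffOn ℝ ∞ (bulkViscosity h) (Set.Ioi 0) :=
  (contDiffOn_id.mul (hh.deriv_of_isOpen isOpen_Ioi (by simp))).sub hh

theorem deriv_bulkViscosity (hh : ContDiffOn ℝ ∞ h (Set.Ioi 0)) {r : ℝ} (hr : 0 < r) :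
    deriv (bulkViscosity h) r = r * deriv (deriv h) r := by
  have hh' : HasDerivAt (deriv h) (deriv (deriv h) r) r :=
    hasDerivAt_of_contDiffOn_Ioi (hh.deriv_of_isOpen isOpen_Ioi (by simp)) hr
  refine (((hasDerivAt_id r).mul hh').sub (hasDerivAt_of_contDiffOn_Ioi hh hr)).deriv.trans ?_
  simp only [id, one_mul, add_sub_cancel_left]

theorem pd_bulkViscosity_comp (hh : ContDiffOn ℝ ∞ h (Set.Ioi 0)) (hρ : ContDiff ℝ ∞ ρ)
    (hpos : ∀ y, 0 < ρ y) (x : Fin d → ℝ) :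
    pd i (fun y => bulkViscosity h (ρ y)) x = ρ x * pd i (fun y => deriv h (ρ y)) x := by
  rw [pd_comp_of_pos (contDiffOn_bulkViscosity hh) hρ hpos, deriv_bulkViscosity hh (hpos x),
    pd_comp_of_pos (hh.deriv_of_isOpen isOpen_Ioi (by simp)) hρ hpos, mul_assoc]

namespace IsViscosityPotential

theorem smul_grad (hΦ : IsViscosityPotential h Φ) (hρ : ContDiff ℝ ∞ ρ) (hpos : ∀ y, 0 < ρ y)
    (x : Fin d → ℝ) : ρ x • grad (fun y => Φ (ρ y)) x = grad (fun y => h (ρ y)) x := by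
  ext j
  simp only [grad, Pi.smul_apply, smul_eq_mul, pd_comp_of_pos hΦ.contDiffOn_viscosity hρ hpos,
    pd_comp_of_pos hΦ.contDiffOn_potential hρ hpos, ← hΦ.mul_deriv _ (hpos x), mul_assoc]

theorem deriv_smul_grad_sqrt (hΦ : IsViscosityPotential h Φ) (hρ : ContDiff ℝ ∞ ρ)
    (hpos : ∀ y, 0 < ρ y) (x : Fin d → ℝ) :
    deriv h (ρ x) • grad (fun y => √(ρ y)) x
      = (1 / 2 * √(ρ x)) • grad (fun y => Φ (ρ y)) x := by
  ext j
  have hsqrt : pd j (fun y => √(ρ y)) x = 1 / (2 * √(ρ x)) * pd j ρ x :=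
    pd_comp (hasDerivAt_sqrt (hpos x).ne') (by fun_prop)
  have hne : √(ρ x) ≠ 0 := (sqrt_pos.2 (hpos x)).ne'
  simp only [grad, Pi.smul_apply, smul_eq_mul, hsqrt, ← hΦ.mul_deriv _ (hpos x),
    pd_comp_of_pos hΦ.contDiffOn_potential hρ hpos]
  field_simp
  rw [sq_sqrt (hpos x).le]
  ring

theorem bohmPotential_eq (hΦ : IsViscosityPotential h Φ) (hρ : ContDiff ℝ ∞ ρ)
    (hpos : ∀ y, 0 < ρ y) (x : Fin d → ℝ) :
    bohmPotential h ρ x = 1 / 2 * (deriv h (ρ x) * lap (fun y => Φ (ρ y)) x)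
      + 1 / 4 * ∑ j, pd j (fun y => Φ (ρ y)) x ^ 2 := by
  have hgrad : DifferentiableAt ℝ (grad fun y => Φ (ρ y)) x :=
    differentiableAt_of_contDiff_infty
      (contDiff_grad (contDiff_comp_of_pos hΦ.contDiffOn_potential hρ hpos)) x
  have hsqrt : DifferentiableAt ℝ (fun y => √(ρ y)) x :=
    DifferentiableAt.sqrt (by fun_prop) (hpos x).ne'
  have hne : √(ρ x) ≠ 0 := (sqrt_pos.2 (hpos x)).ne'
  have hdvg : dvg (fun y => deriv h (ρ y) • grad (fun z => √(ρ z)) y) x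
      = 1 / 2 * √(ρ x) * lap (fun y => Φ (ρ y)) x
        + 1 / 2 * ∑ j, pd j (fun y => Φ (ρ y)) x * pd j (fun y => √(ρ y)) x := by
    simp only [hΦ.deriv_smul_grad_sqrt hρ hpos]
    rw [dvg_smul (hsqrt.const_mul _) hgrad]
    simp only [pd_const_mul hsqrt, mul_left_comm _ (1 / 2 : ℝ), ← Finset.mul_sum]
    rfl
  have hsum : deriv h (ρ x) * ∑ j, pd j (fun y => Φ (ρ y)) x * pd j (fun y => √(ρ y)) x
      = 1 / 2 * √(ρ x) * ∑ j, pd j (fun y => Φ (ρ y)) x ^ 2 := by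
    rw [Finset.mul_sum, Finset.mul_sum]
    refine Finset.sum_congr rfl fun j _ => ?_
    have hj := congrFun (hΦ.deriv_smul_grad_sqrt hρ hpos x) j
    simp only [Pi.smul_apply, smul_eq_mul, grad] at hj
    linear_combination pd j (fun y => Φ (ρ y)) x * hj
  rw [bohmPotential, hdvg, div_eq_iff hne]
  linear_combination 1 / 2 * hsum

theorem dvgM_mul_hess_add_grad_bulkViscosity_mul_lap (hΦ : IsViscosityPotential h Φ)
    (hρ : ContDiff ℝ ∞ ρ) (hpos : ∀ y, 0 < ρ y) (x : Fin d → ℝ) :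
    dvgM (fun y i j => h (ρ y) * hess (fun z => Φ (ρ z)) y i j) x i
      + grad (fun y => bulkViscosity h (ρ y) * lap (fun z => Φ (ρ z)) y) x i
      = 2 * ρ x * grad (bohmPotential h ρ) x i := by
  have hH := contDiff_comp_of_pos hΦ.contDiffOn_viscosity hρ hpos
  have hA := differentiableAt_of_contDiff_infty
    (contDiff_deriv_comp_of_pos hΦ.contDiffOn_viscosity hρ hpos) x
  have hG := differentiableAt_of_contDiff_infty
    (contDiff_comp_of_pos (contDiffOn_bulkViscosity hΦ.contDiffOn_viscosity) hρ hpos) x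
  have hF := contDiff_comp_of_pos hΦ.contDiffOn_potential hρ hpos
  have hpdH : ∀ j, pd j (fun y => h (ρ y)) x = ρ x * pd j (fun y => Φ (ρ y)) x := fun j =>
    (congrFun (hΦ.smul_grad hρ hpos x) j).symm
  have hpdG := pd_bulkViscosity_comp (i := i) hΦ.contDiffOn_viscosity hρ hpos x
  rw [dvgM_mul_hess hH hF, funext (hΦ.bohmPotential_eq hρ hpos)]
  generalize (fun y => Φ (ρ y)) = F at *
  have hlap : DifferentiableAt ℝ (fun y => lap F y) x := by fun_prop
  have hAlap : DifferentiableAt ℝ (fun y => deriv h (ρ y) * lap F y) x := hA.mul hlap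
  have hsq : DifferentiableAt ℝ (fun y => ∑ j, pd j F y ^ 2) x := by fun_prop
  have hgrad_bulk : grad (fun y => bulkViscosity h (ρ y) * lap F y) x i
      = bulkViscosity h (ρ x) * grad (lap F) x i
        + lap F x * (ρ x * pd i (fun y => deriv h (ρ y)) x) :=
    (pd_mul hG hlap).trans (by rw [hpdG]; rfl)
  have hgrad_bohm :
      grad (fun y => 1 / 2 * (deriv h (ρ y) * lap F y) + 1 / 4 * ∑ j, pd j F y ^ 2) x i
        = 1 / 2 * (deriv h (ρ x) * grad (lap F) x i + lap F x * pd i (fun y => deriv h (ρ y)) x)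
          + 1 / 4 * (2 * ∑ j, pd j F x * hess F x i j) := by
    rw [grad, pd_add (hAlap.const_mul _) (hsq.const_mul _), pd_const_mul hAlap, pd_mul hA hlap,
      pd_const_mul hsq, pd_sum_sq_pd hF]
    rfl
  rw [hgrad_bulk, hgrad_bohm]
  simp only [hpdH, mul_assoc, ← Finset.mul_sum, bulkViscosity]
  ring

theorem grad_drag_pressure (hΦ : IsViscosityPotential h Φ)
    (hP : ∀ r : ℝ, 0 < r → HasDerivAt P (μ * a r * deriv h r / r) r)
    (hρ : ContDiff ℝ ∞ ρ) (hpos : ∀ y, 0 < ρ y) (x : Fin d → ℝ) :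
    grad (fun y => P (ρ y)) x i = μ * a (ρ x) * grad (fun y => Φ (ρ y)) x i := by
  have hne : ρ x ≠ 0 := (hpos x).ne'
  rw [grad, grad, pd_comp (hP _ (hpos x)) (by fun_prop),
    pd_comp_of_pos hΦ.contDiffOn_potential hρ hpos, ← hΦ.mul_deriv _ (hpos x)]
  field_simp

end IsViscosityPotential

end BohmPotential

section EffectiveVelocity

open scoped ContDiff

variable {d : ℕ} {i : Fin d} {I : Set ℝ} {h Φ p a P q : ℝ → ℝ} {ν κ c μ t : ℝ}
  {ρ : ℝ → (Fin d → ℝ) → ℝ} {u : ℝ → (Fin d → ℝ) → Fin d → ℝ}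

/-- `(ρ, u)` is a smooth solution with positive density, for times in `I`, of the quantum
Navier–Stokes system with shear viscosity `h`, pressure `p`, drag coefficient `a`, viscosity
constant `ν` and capillarity constant `κ`. The space is `ℝ^d`: periodicity is not part of the
notion. -/
structure IsQuantumNSSolution (I : Set ℝ) (h p a : ℝ → ℝ) (ν κ : ℝ) (ρ : ℝ → (Fin d → ℝ) → ℝ)
    (u : ℝ → (Fin d → ℝ) → Fin d → ℝ) : Prop where
  contDiffOn_density :
    ContDiffOn ℝ ∞ (fun z : ℝ × (Fin d → ℝ) => ρ z.1 z.2) (I ×ˢ Set.univ)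
  contDiffOn_velocity :
    ContDiffOn ℝ ∞ (fun z : ℝ × (Fin d → ℝ) => u z.1 z.2) (I ×ˢ Set.univ)
  density_pos : ∀ t ∈ I, ∀ x, 0 < ρ t x
  continuity : ∀ t ∈ I, ∀ x,
    deriv (fun s => ρ s x) t + dvg (fun y => ρ t y • u t y) x = 0
  momentum : ∀ t ∈ I, ∀ x i,
    deriv (fun s => ρ s x * u s x i) t
      + dvgM (fun y i' j => ρ t y * u t y i' * u t y j) x i
      + grad (fun y => p (ρ t y)) x i
      + a (ρ t x) * u t x i
    = 2 * ν * dvgM (fun y i' j => h (ρ t y) * symD (u t) y i' j) x i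
      + 2 * ν * grad (fun y => bulkViscosity h (ρ t y) * dvg (u t) y) x i
      + 2 * κ ^ 2 * ρ t x * grad (bohmPotential h (ρ t)) x i

/-- The effective velocity `v = u + c ∇Φ(ρ)`. -/
def effectiveVelocity (Φ : ℝ → ℝ) (c : ℝ) (ρ : ℝ → (Fin d → ℝ) → ℝ)
    (u : ℝ → (Fin d → ℝ) → Fin d → ℝ) (t : ℝ) (x : Fin d → ℝ) : Fin d → ℝ :=
  u t x + c • grad (fun y => Φ (ρ t y)) x

theorem contDiff_slice {E : Type*} [NormedAddCommGroup E] [NormedSpace ℝ E]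
    {w : ℝ → (Fin d → ℝ) → E}
    (hw : ContDiffOn ℝ ∞ (fun z : ℝ × (Fin d → ℝ) => w z.1 z.2) (I ×ˢ Set.univ)) (ht : t ∈ I) :
    ContDiff ℝ ∞ (w t) :=
  hw.comp_contDiff (contDiff_prodMk_right t) fun _ => ⟨ht, trivial⟩

theorem contDiffAt_of_contDiffOn_prod_univ {E : Type*} [NormedAddCommGroup E] [NormedSpace ℝ E]
    {W : ℝ × (Fin d → ℝ) → E} (hW : ContDiffOn ℝ ∞ W (I ×ˢ Set.univ)) (hI : IsOpen I)
    (ht : t ∈ I) (x : Fin d → ℝ) : ContDiffAt ℝ ∞ W (t, x) :=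
  hW.contDiffAt ((hI.prod isOpen_univ).mem_nhds ⟨ht, trivial⟩)

namespace IsQuantumNSSolution

theorem deriv_viscosity (hsol : IsQuantumNSSolution I h p a ν κ ρ u) (hI : IsOpen I) (ht : t ∈ I)
    (hh : ContDiffOn ℝ ∞ h (Set.Ioi 0)) (x : Fin d → ℝ) :
    deriv (fun s => h (ρ s x)) t
      = -(dvg (fun y => h (ρ t y) • u t y) x + bulkViscosity h (ρ t x) * dvg (u t) x) := by
  have hρt : DifferentiableAt ℝ (fun s => ρ s x) t :=
    (hasDerivAt_time_slice ((contDiffAt_of_contDiffOn_prod_univ hsol.contDiffOn_density hI ht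
      x).differentiableAt (by simp))).differentiableAt
  have hchain : deriv (fun s => h (ρ s x)) t = deriv h (ρ t x) * deriv (fun s => ρ s x) t :=
    ((hasDerivAt_of_contDiffOn_Ioi hh (hsol.density_pos t ht x)).comp t hρt.hasDerivAt).deriv
  rw [hchain, eq_neg_of_add_eq_zero_left (hsol.continuity t ht x), mul_neg,
    deriv_mul_dvg_smul hh (contDiff_slice hsol.contDiffOn_density ht) (hsol.density_pos t ht)
      (contDiff_slice hsol.contDiffOn_velocity ht)]

theorem hasDerivAt_grad_viscosity (hsol : IsQuantumNSSolution I h p a ν κ ρ u) (hI : IsOpen I)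
    (ht : t ∈ I) (hh : ContDiffOn ℝ ∞ h (Set.Ioi 0)) (x : Fin d → ℝ) :
    HasDerivAt (fun s => grad (fun y => h (ρ s y)) x i)
      (-(grad (fun y => dvg (fun z => h (ρ t z) • u t z) y) x i
        + grad (fun y => bulkViscosity h (ρ t y) * dvg (u t) y) x i)) t := by
  have hρ := contDiff_slice hsol.contDiffOn_density ht
  have hu := contDiff_slice hsol.contDiffOn_velocity ht
  have hpos := hsol.density_pos t ht
  have hcd : ContDiffAt ℝ ∞ (fun z : ℝ × (Fin d → ℝ) => h (ρ z.1 z.2)) (t, x) :=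
    (hh.contDiffAt (Ioi_mem_nhds (hpos x))).comp (t, x)
      (contDiffAt_of_contDiffOn_prod_univ hsol.contDiffOn_density hI ht x)
  have hderiv := hasDerivAt_pd_of_contDiffAt (i := i) (w := fun s y => h (ρ s y))
    (contDiffAt_infty.1 hcd 2)
  simp only [hsol.deriv_viscosity hI ht hh] at hderiv
  have hflux : DifferentiableAt ℝ (fun y => dvg (fun z => h (ρ t z) • u t z) y) x :=
    differentiableAt_of_contDiff_infty
      (contDiff_dvg ((contDiff_comp_of_pos hh hρ hpos).smul hu)) x
  have hbulk : DifferentiableAt ℝ (fun y => bulkViscosity h (ρ t y) * dvg (u t) y) x :=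
    differentiableAt_of_contDiff_infty
      ((contDiff_comp_of_pos (contDiffOn_bulkViscosity hh) hρ hpos).mul (contDiff_dvg hu)) x
  rw [pd_neg, pd_add hflux hbulk] at hderiv
  exact hderiv

theorem deriv_effective_momentum (hsol : IsQuantumNSSolution I h p a ν κ ρ u) (hI : IsOpen I)
    (ht : t ∈ I) (hΦ : IsViscosityPotential h Φ) (x : Fin d → ℝ) :
    deriv (fun s => ρ s x * effectiveVelocity Φ c ρ u s x i) t
      = deriv (fun s => ρ s x * u s x i) t
        - c * (grad (fun y => dvg (fun z => h (ρ t z) • u t z) y) x i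
          + grad (fun y => bulkViscosity h (ρ t y) * dvg (u t) y) x i) := by
  have hflux : DifferentiableAt ℝ (fun s => ρ s x * u s x i) t := by
    have hρ := contDiffAt_of_contDiffOn_prod_univ hsol.contDiffOn_density hI ht x
    have hu := contDiffAt_of_contDiffOn_prod_univ hsol.contDiffOn_velocity hI ht x
    exact (hasDerivAt_time_slice ((hρ.mul (contDiffAt_pi.1 hu i)).differentiableAt
      (by simp))).differentiableAt
  have hsplit : (fun s => ρ s x * effectiveVelocity Φ c ρ u s x i)
      =ᶠ[nhds t] fun s => ρ s x * u s x i + c * grad (fun y => h (ρ s y)) x i := by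
    filter_upwards [hI.mem_nhds ht] with s hs
    rw [← hΦ.smul_grad (contDiff_slice hsol.contDiffOn_density hs) (hsol.density_pos s hs)]
    simp only [effectiveVelocity, Pi.add_apply, Pi.smul_apply, smul_eq_mul]
    ring
  rw [hsplit.deriv_eq]
  exact (hflux.hasDerivAt.add ((hsol.hasDerivAt_grad_viscosity hI ht hΦ.contDiffOn_viscosity
    x).const_mul c)).deriv.trans (by ring)

theorem effective_continuity (hsol : IsQuantumNSSolution I h p a ν κ ρ u) (ht : t ∈ I)
    (hΦ : IsViscosityPotential h Φ) (x : Fin d → ℝ) :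
    deriv (fun s => ρ s x) t + dvg (fun y => ρ t y • effectiveVelocity Φ c ρ u t y) x
      = c * lap (fun y => h (ρ t y)) x := by
  have hρ := contDiff_slice hsol.contDiffOn_density ht
  have hu := contDiff_slice hsol.contDiffOn_velocity ht
  have hpos := hsol.density_pos t ht
  have hgrad : DifferentiableAt ℝ (grad fun y => h (ρ t y)) x :=
    differentiableAt_of_contDiff_infty
      (contDiff_grad (contDiff_comp_of_pos hΦ.contDiffOn_viscosity hρ hpos)) x
  have hsplit : (fun y => ρ t y • effectiveVelocity Φ c ρ u t y)
      = fun y => ρ t y • u t y + c • grad (fun z => h (ρ t z)) y := by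
    funext y
    rw [effectiveVelocity, smul_add, smul_comm, hΦ.smul_grad hρ hpos]
  rw [hsplit, dvg_add_smul (by fun_prop) hgrad, dvg_grad]
  linear_combination hsol.continuity t ht x

theorem effective_momentum (hsol : IsQuantumNSSolution I h p a ν κ ρ u) (hI : IsOpen I)
    (ht : t ∈ I) (hΦ : IsViscosityPotential h Φ) (x : Fin d → ℝ) (i : Fin d) :
    deriv (fun s => ρ s x * effectiveVelocity Φ c ρ u s x i) t
      + dvgM (fun y i' j => ρ t y * effectiveVelocity Φ c ρ u t y i'
          * effectiveVelocity Φ c ρ u t y j) x i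
      + grad (fun y => p (ρ t y)) x i
      - c * lap (fun y => h (ρ t y) * effectiveVelocity Φ c ρ u t y i) x
      + a (ρ t x) * u t x i
      - 2 * (ν - c) * dvgM (fun y i' j =>
          h (ρ t y) * symD (effectiveVelocity Φ c ρ u t) y i' j) x i
      - (2 * ν - c) * grad (fun y =>
          bulkViscosity h (ρ t y) * dvg (effectiveVelocity Φ c ρ u t) y) x i
      - 2 * (κ ^ 2 - 2 * ν * c + c ^ 2) * ρ t x * grad (bohmPotential h (ρ t)) x i
    = 0 := by
  have hρ := contDiff_slice hsol.contDiffOn_density ht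
  have hu := contDiff_slice hsol.contDiffOn_velocity ht
  have hpos := hsol.density_pos t ht
  have hH := contDiff_comp_of_pos hΦ.contDiffOn_viscosity hρ hpos
  have hG := contDiff_comp_of_pos (contDiffOn_bulkViscosity hΦ.contDiffOn_viscosity) hρ hpos
  have hF := contDiff_comp_of_pos hΦ.contDiffOn_potential hρ hpos
  have hw := contDiff_grad hF
  have hstrain : (fun y i' j => h (ρ t y) * symD (grad fun z => Φ (ρ t z)) y i' j)
      = fun y i' j => h (ρ t y) * hess (fun z => Φ (ρ t z)) y i' j := by
    funext y i' j
    rw [symD_grad (contDiff_infty.1 hF 2).contDiffAt]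
  have htransport := dvgM_tens_grad_add_tens_grad (i := i) hH hu x
  have hdiffusion := lap_mul_grad (i := i) hH hF x
  have hbohm := hΦ.dvgM_mul_hess_add_grad_bulkViscosity_mul_lap (i := i) hρ hpos x
  have hv : effectiveVelocity Φ c ρ u t = fun y => u t y + c • grad (fun z => Φ (ρ t z)) y := rfl
  rw [hsol.deriv_effective_momentum hI ht hΦ, hv,
    dvgM_convection_add_smul hρ hH hu hw (hΦ.smul_grad hρ hpos), lap_mul_add_smul hH hu hw,
    dvgM_mul_symD_add_smul hH hu hw, grad_mul_dvg_add_smul hG hu hw, hstrain]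
  simp only [dvg_grad]
  linear_combination hsol.momentum t ht x i + c * htransport - c ^ 2 * hdiffusion
    + (c ^ 2 - 2 * ν * c) * hbohm

end IsQuantumNSSolution

theorem statement7_general (hI : IsOpen I) (hμ : μ ≠ 0) (hΦ : IsViscosityPotential h Φ)
    (hq : ∀ r : ℝ, 0 < r → DifferentiableAt ℝ q r)
    (hP : ∀ r : ℝ, 0 < r → HasDerivAt P (μ * a r * deriv h r / r) r)
    (hsol : IsQuantumNSSolution I h (fun r => q r + P r) a ν κ ρ u)
    (v : ℝ → (Fin d → ℝ) → Fin d → ℝ)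
    (hv : ∀ s y i, v s y i = u s y i + c * grad (fun z => Φ (ρ s z)) y i) :
    ∀ t ∈ I, ∀ x : Fin d → ℝ,
      (deriv (fun s => ρ s x) t + dvg (fun y => ρ t y • v t y) x
        = c * lap (fun y => h (ρ t y)) x)
      ∧
      (∀ i : Fin d,
        deriv (fun s => ρ s x * v s x i) t
          + dvgM (fun y i' j => ρ t y * v t y i' * v t y j) x i
          + grad (fun y => q (ρ t y)) x i
          + (μ - c) / μ * grad (fun y => P (ρ t y)) x i
          - c * lap (fun y => h (ρ t y) * v t y i) x
          + a (ρ t x) * v t x i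
          - 2 * (ν - c) * dvgM (fun y i' j => h (ρ t y) * symD (v t) y i' j) x i
          - (2 * ν - c) * grad (fun y => bulkViscosity h (ρ t y) * dvg (v t) y) x i
          - 2 * (κ ^ 2 - 2 * ν * c + c ^ 2) * ρ t x * grad (bohmPotential h (ρ t)) x i
        = 0) := by
  obtain rfl : v = effectiveVelocity Φ c ρ u := funext fun s => funext fun y => funext (hv s y)
  refine fun t ht x => ⟨hsol.effective_continuity ht hΦ x, fun i => ?_⟩
  have hρ := contDiff_slice hsol.contDiffOn_density ht
  have hpos := hsol.density_pos t ht x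
  have hpressure : grad (fun y => q (ρ t y) + P (ρ t y)) x i
      = grad (fun y => q (ρ t y)) x i + grad (fun y => P (ρ t y)) x i :=
    pd_add ((hq _ hpos).comp x (by fun_prop)) ((hP _ hpos).differentiableAt.comp x (by fun_prop))
  have hdrag := hΦ.grad_drag_pressure (i := i) hP hρ (hsol.density_pos t ht) x
  have hfraction : (μ - c) / μ * grad (fun y => P (ρ t y)) x i
      = grad (fun y => P (ρ t y)) x i - c * a (ρ t x) * grad (fun y => Φ (ρ t y)) x i := by
    rw [hdrag]
    field_simp
  rw [hfraction, hv t x i]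
  linear_combination hsol.effective_momentum (c := c) hI ht hΦ x i - hpressure

end EffectiveVelocity

section ApproximatingSystem

open scoped ContDiff

variable {d : ℕ} {ε γ ν κ T : ℝ} {P Φ : ℝ → ℝ}

theorem contDiffOn_hfun (ε γ : ℝ) : ContDiffOn ℝ ∞ (hfun ε γ) (Set.Ioi 0) := fun r hr => by
  have hpow (e : ℝ) : ContDiffAt ℝ ∞ (fun s : ℝ => s ^ e) r :=
    contDiffAt_rpow_const_of_ne (ne_of_gt hr)
  exact ((contDiffAt_id.add (contDiffAt_const.mul (hpow _))).add
    (contDiffAt_const.mul (hpow _))).contDiffWithinAt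

theorem IsPhieps.isViscosityPotential (hΦ : IsPhieps ε γ Φ) :
    IsViscosityPotential (hfun ε γ) Φ :=
  ⟨contDiffOn_hfun ε γ, hΦ.1, hΦ.2⟩

theorem muof_pos (hκ : 0 < κ) (hκν : κ < ν) : 0 < muof ν κ :=
  sub_pos.2 ((sqrt_lt' (hκ.trans hκν)).2 (sub_lt_self _ (pow_pos hκ 2)))

theorem IsQNSSol.isQuantumNSSolution {ρ : ℝ → (Fin d → ℝ) → ℝ}
    {u : ℝ → (Fin d → ℝ) → Fin d → ℝ} (hsol : IsQNSSol d ε γ ν κ T P ρ u) :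
    IsQuantumNSSolution (Set.Ioo 0 T) (hfun ε γ) (fun r => r ^ γ + P r) (ptil ε) ν κ ρ u :=
  have ⟨hρ, hu, hpos, _, _, hcontinuity, hmomentum⟩ := hsol
  have hsub : Set.Ioo 0 T ×ˢ Set.univ ⊆ Set.Icc 0 T ×ˢ (Set.univ : Set (Fin d → ℝ)) :=
    Set.prod_mono_left Set.Ioo_subset_Icc_self
  ⟨hρ.mono hsub, hu.mono hsub, fun t _ => hpos t, hcontinuity, hmomentum⟩

end ApproximatingSystem

theorem statement7 (d : ℕ) (hd : 1 ≤ d) (ε γ ν κ T c : ℝ)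
    (hε : 0 < ε) (hγ : 1 < γ) (hκ : 0 < κ) (hνκ : κ < ν) (hT : 0 < T) (hc : 0 < c)
    (P Φ : ℝ → ℝ) (hP : IsPeps ε γ ν κ P) (hΦ : IsPhieps ε γ Φ)
    (ρ : ℝ → (Fin d → ℝ) → ℝ) (u : ℝ → (Fin d → ℝ) → (Fin d → ℝ))
    (hsol : IsQNSSol d ε γ ν κ T P ρ u)
    (v : ℝ → (Fin d → ℝ) → (Fin d → ℝ))
    (hv : ∀ s y i, v s y i = u s y i + c * grad (fun z => Φ (ρ s z)) y i) :
    ∀ t ∈ Set.Ioo 0 T, ∀ x : Fin d → ℝ,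
      (deriv (fun s => ρ s x) t + dvg (fun y => ρ t y • v t y) x
        = c * lap (fun y => hfun ε γ (ρ t y)) x)
      ∧
      (∀ i : Fin d,
        deriv (fun s => ρ s x * v s x i) t
          + dvgM (fun y i' j => ρ t y * v t y i' * v t y j) x i
          + grad (fun y => ρ t y ^ γ) x i
          + (muof ν κ - c) / muof ν κ * grad (fun y => P (ρ t y)) x i
          - c * lap (fun y => hfun ε γ (ρ t y) * v t y i) x
          + ptil ε (ρ t x) * v t x i
          - 2 * (ν - c) * dvgM (fun y i' j => hfun ε γ (ρ t y) * symD (v t) y i' j) x i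
          - (2 * ν - c) * grad (fun y => gfun ε γ (ρ t y) * dvg (v t) y) x i
          - 2 * (κ ^ 2 - 2 * ν * c + c ^ 2) * ρ t x * Kvec ε γ (ρ t) x i
        = 0) :=
  statement7_general isOpen_Ioo (muof_pos hκ hνκ).ne' hΦ.isViscosityPotential
    (fun _ hr => differentiableAt_rpow_const_of_ne γ hr.ne') hP hsol.isQuantumNSSolution v hv

end
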